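/- For every real number c > 0 there exists a unique representation basis A of the integers such that A(-x,x) > c·log x for all sufficiently large real numbers x. -/

import Mathlib

open Filter Set

/-- `repCount A n` is the number of representations of `n` as `a + a'` with
`a ≤ a'` and `a, a' ∈ A`. -/
noncomputable def repCount (A : Set ℤ) (n : ℤ) : ℕ :=
  {p : ℤ × ℤ | p.1 ∈ A ∧ p.2 ∈ A ∧ p.1 ≤ p.2 ∧ p.1 + p.2 = n}.ncard

/-- `A` is a unique representation basis of `ℤ` if `r_A(n) = 1` for all `n`. -/
def IsUniqueRepBasis (A : Set ℤ) : Prop := ∀ n : ℤ, repCount A n = 1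

/-- `countIn A y x` is the number of elements of `A` in the real interval `[y, x]`. -/
noncomputable def countIn (A : Set ℤ) (y x : ℝ) : ℕ :=
  {a : ℤ | a ∈ A ∧ y ≤ (a : ℝ) ∧ (a : ℝ) ≤ x}.ncard

/-!
The basis is the union of an increasing chain of finite Sidon sets `A k`. To represent a further
integer `n`, adjoin `b` and `n - b` (only `b` if `n` is already a sum, so that the sets still grow).
The Sidon property survives unless `g b = s + t - u - v` for some `1 ≤ g ≤ 4` and
`s, t, u, v ∈ A k ∪ {0, n}`, which excludes only `O((k + 1) ^ 4)` values of `b`, so `b` can be taken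
of that size. Running through an enumeration of `ℤ` whose `k`-th term is at most `k` in absolute
value, `A k` has at least `k` elements and lies in `[-C k ^ 4, C k ^ 4]`. Hence the counting
function of the union grows at least like `x ^ (1 / 4)`, which beats every multiple of `log x`.
-/

open Asymptotics
open scoped Pointwise Finset

section Sidon

variable {G : Type*}

/-- A Sidon set: the sum of two elements of `A`, which may coincide, determines the unordered pair
of summands. For `A ⊆ ℤ` this says that no integer is `a + a'` with `a ≤ a'` in `A` in two ways. -/
def IsSidon [Add G] (A : Set G) : Prop :=
  ∀ ⦃x⦄, x ∈ A → ∀ ⦃y⦄, y ∈ A → ∀ ⦃z⦄, z ∈ A → ∀ ⦃w⦄, w ∈ A →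
    x + y = z + w → x = z ∧ y = w ∨ x = w ∧ y = z

lemma isSidon_empty [Add G] : IsSidon (∅ : Set G) := fun _ hx => hx.elim

lemma IsSidon.iUnion {ι : Type*} [Add G] [Nonempty ι] {A : ι → Set G}
    (hdir : Directed (· ⊆ ·) A) (hA : ∀ i, IsSidon (A i)) : IsSidon (⋃ i, A i) := by
  classical
  intro x hx y hy z hz w hw
  obtain ⟨i, hi⟩ := hdir.exists_mem_subset_of_finset_subset_biUnion
    (s := ({x, y, z, w} : Finset G)) (by simp [insert_subset_iff, hx, hy, hz, hw, -mem_iUnion])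
  exact hA i (hi (by simp)) (hi (by simp)) (hi (by simp)) (hi (by simp))

variable [AddCommGroup G] {A S : Set G} {b n : G}

protected lemma IsSidon.insert (hA : IsSidon A) (hb : b ∉ A + A - A) (hbb : b + b ∉ A + A) :
    IsSidon (insert b A) := by
  have hb' : ∀ x ∈ A, ∀ y ∈ A, ∀ z ∈ A, b + x ≠ y + z := fun x hx y hy z hz h =>
    hb ⟨y + z, add_mem_add hy hz, x, hx, (eq_sub_of_add_eq h).symm⟩
  have hbb' : ∀ x ∈ A, ∀ y ∈ A, b + b ≠ x + y := fun x hx y hy h =>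
    hbb ⟨x, hx, y, hy, h.symm⟩
  rintro x (rfl | hx) y (rfl | hy) z (rfl | hz) w (rfl | hw) h <;> grind [IsSidon]

lemma IsSidon.insert_of_nsmul_notMem (hA : IsSidon A) (hAS : A ⊆ S) (h0 : 0 ∈ S)
    (hb : ∀ g ∈ Finset.Icc 1 2, g • b ∉ S + S - S - S) : IsSidon (insert b A) := by
  refine hA.insert (fun h => hb 1 (by simp) ?_) (fun h => hb 2 (by simp) ?_)
  · rw [one_nsmul, ← sub_zero b]
    exact sub_mem_sub (sub_subset_sub (add_subset_add hAS hAS) hAS h) h0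
  · rw [two_nsmul, ← sub_zero (b + b), ← sub_zero (b + b)]
    exact sub_mem_sub (sub_mem_sub (add_subset_add hAS hAS h) h0) h0

-- A coincidence of two sums in `A ∪ {b, n - b}`, solved for `b` and padded by `0`, reads
-- `g • b = s + t - u - v`; the worst case `b + b = (n - b) + (n - b)` gives `g = 4`.
lemma IsSidon.insert_sub_insert_of_nsmul_notMem (hA : IsSidon A) (hAS : A ⊆ S) (h0 : 0 ∈ S)
    (hnS : n ∈ S) (hn : n ∉ A + A) (hb : ∀ g ∈ Finset.Icc 1 4, g • b ∉ S + S - S - S) :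
    IsSidon (insert (n - b) (insert b A)) := by
  have hb' : ∀ g ∈ Finset.Icc 1 4, ∀ s ∈ S, ∀ t ∈ S, ∀ u ∈ S, ∀ v ∈ S, g • b ≠ s + t - u - v :=
    fun g hg s hs t ht u hu v hv h =>
      hb g hg (h ▸ sub_mem_sub (sub_mem_sub (add_mem_add hs ht) hu) hv)
  have hn' : ∀ x ∈ A, ∀ y ∈ A, n ≠ x + y := fun x hx y hy h => hn ⟨x, hx, y, hy, h.symm⟩
  refine (hA.insert_of_nsmul_notMem hAS h0 fun g hg =>
    hb g (Finset.Icc_subset_Icc_right (by norm_num) hg)).insert ?_ ?_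
  · rintro ⟨_, ⟨x, hx, y, hy, rfl⟩, z, hz, h⟩
    have h : n - b = x + y - z := h.symm
    rcases hx with rfl | hx <;> rcases hy with rfl | hy <;> rcases hz with rfl | hz
    · exact hb' 2 (by simp) n hnS 0 h0 0 h0 0 h0 (by grind)
    · exact hb' 3 (by simp) n hnS z (hAS hz) 0 h0 0 h0 (by grind)
    · exact hb' 1 (by simp) n hnS 0 h0 y (hAS hy) 0 h0 (by grind)
    · exact hb' 2 (by simp) n hnS z (hAS hz) y (hAS hy) 0 h0 (by grind)
    · exact hb' 1 (by simp) n hnS 0 h0 x (hAS hx) 0 h0 (by grind)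
    · exact hb' 2 (by simp) n hnS z (hAS hz) x (hAS hx) 0 h0 (by grind)
    · exact hn' x hx y hy (by grind)
    · exact hb' 1 (by simp) n hnS z (hAS hz) x (hAS hx) y (hAS hy) (by grind)
  · rintro ⟨x, hx, y, hy, h⟩
    have h : x + y = n - b + (n - b) := h
    rcases hx with rfl | hx <;> rcases hy with rfl | hy
    · exact hb' 4 (by simp) n hnS n hnS 0 h0 0 h0 (by grind)
    · exact hb' 3 (by simp) n hnS n hnS y (hAS hy) 0 h0 (by grind)
    · exact hb' 3 (by simp) n hnS n hnS x (hAS hx) 0 h0 (by grind)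
    · exact hb' 2 (by simp) n hnS n hnS x (hAS hx) y (hAS hy) (by grind)

end Sidon

lemma exists_mem_Icc_nsmul_notMem {T : Finset ℤ} {m N : ℕ} (h : m * #T < N) :
    ∃ b ∈ Finset.Icc (1 : ℤ) N, ∀ g ∈ Finset.Icc 1 m, g • b ∉ T := by
  let bad : Finset ℤ := (Finset.Icc 1 m).biUnion fun g => T.image (· / (g : ℤ))
  have hbad : #bad < #(Finset.Icc (1 : ℤ) N) := by
    calc #bad ≤ #(Finset.Icc 1 m) * #T :=
          Finset.card_biUnion_le_card_mul _ _ _ fun _ _ => Finset.card_image_le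
      _ < N := by simpa using h
      _ = _ := by simp
  obtain ⟨b, hb, hb_bad⟩ := Finset.exists_mem_notMem_of_card_lt_card hbad
  refine ⟨b, hb, fun g hg hgT => hb_bad (Finset.mem_biUnion.2 ⟨g, hg, ?_⟩)⟩
  have hg0 : (g : ℤ) ≠ 0 := by grind
  exact Finset.mem_image.2 ⟨_, hgT, by simp [Int.mul_ediv_cancel_left _ hg0]⟩

lemma exists_mem_Icc_nsmul_notMem_add_sub_sub (S : Finset ℤ) (m : ℕ) :
    ∃ b ∈ Finset.Icc (1 : ℤ) (m * #S ^ 4 + 1), ∀ g ∈ Finset.Icc 1 m, g • b ∉ S + S - S - S := by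
  have hcard : #(S + S - S - S) ≤ #S ^ 4 := by
    calc #(S + S - S - S) ≤ #S * #S * #S * #S := by
          grw [Finset.card_sub_le, Finset.card_sub_le, Finset.card_add_le]
      _ = #S ^ 4 := by ring
  exact mod_cast exists_mem_Icc_nsmul_notMem (Nat.lt_succ_of_le (Nat.mul_le_mul_left m hcard))

lemma card_insert_insert_le {α : Type*} [DecidableEq α] (a b : α) (s : Finset α) :
    #(insert a (insert b s)) ≤ #s + 2 :=
  (Finset.card_insert_le _ _).trans (Nat.succ_le_succ (Finset.card_insert_le _ _))

lemma IsSidon.exists_ssuperset_mem_add {A : Finset ℤ} (hA : IsSidon (A : Set ℤ)) (n : ℤ) :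
    ∃ B : Finset ℤ, A ⊂ B ∧ IsSidon (B : Set ℤ) ∧ n ∈ B + B ∧ #B ≤ #A + 2 ∧
      ∀ a ∈ B, a ∈ A ∨ |a| ≤ |n| + (4 * (#A + 2) ^ 4 + 1) := by
  let S : Finset ℤ := insert 0 (insert n A)
  have hAS : (A : Set ℤ) ⊆ S := by
    exact_mod_cast (Finset.subset_insert n A).trans (Finset.subset_insert 0 _)
  have h0 : (0 : ℤ) ∈ (S : Set ℤ) := by simp [S]
  have hnS : n ∈ (S : Set ℤ) := by simp [S]
  have hS : #S ≤ #A + 2 := card_insert_insert_le _ _ _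
  obtain ⟨b, hbS, hb⟩ := exists_mem_Icc_nsmul_notMem_add_sub_sub S 4
  replace hb : ∀ g ∈ Finset.Icc 1 4, g • b ∉ (S + S - S - S : Set ℤ) := mod_cast hb
  have hb_abs : |b| ≤ 4 * (#A + 2) ^ 4 + 1 := by
    rw [Finset.mem_Icc] at hbS
    calc |b| = b := abs_of_pos hbS.1
      _ ≤ 4 * (#S : ℤ) ^ 4 + 1 := hbS.2
      _ ≤ 4 * (#A + 2) ^ 4 + 1 := by gcongr; exact_mod_cast hS
  have hbA : b ∉ A := fun hbA => hb 1 (by simp) <| by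
    simpa using sub_mem_sub (sub_mem_sub (add_mem_add (hAS hbA) h0) h0) h0
  have hb_insert : IsSidon (insert b A : Set ℤ) := hA.insert_of_nsmul_notMem hAS h0 fun g hg =>
    hb g (Finset.Icc_subset_Icc_right (by norm_num) hg)
  by_cases hn : n ∈ A + A
  · refine ⟨insert b A, Finset.ssubset_insert hbA, mod_cast hb_insert, ?_, ?_, ?_⟩
    · exact Finset.add_subset_add (Finset.subset_insert _ _) (Finset.subset_insert _ _) hn
    · exact (Finset.card_insert_le _ _).trans (by omega)
    · simp only [Finset.mem_insert]
      rintro a (rfl | ha)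
      · exact Or.inr (hb_abs.trans (le_add_of_nonneg_left (abs_nonneg n)))
      · exact Or.inl ha
  · refine ⟨insert (n - b) (insert b A),
      (Finset.ssubset_insert hbA).trans_subset (Finset.subset_insert _ _), ?_, ?_,
      card_insert_insert_le _ _ _, ?_⟩
    · push_cast
      exact hA.insert_sub_insert_of_nsmul_notMem hAS h0 hnS (mod_cast hn) hb
    · exact Finset.mem_add.2 ⟨n - b, by simp, b, by simp, by simp⟩
    · simp only [Finset.mem_insert]
      rintro a (rfl | rfl | ha)
      · exact Or.inr ((abs_sub n b).trans (by gcongr))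
      · exact Or.inr (hb_abs.trans (le_add_of_nonneg_left (abs_nonneg n)))
      · exact Or.inl ha

lemma exists_strictMono_isSidon {e : ℕ → ℤ} (he : ∀ k, |e k| ≤ k) :
    ∃ A : ℕ → Finset ℤ, StrictMono A ∧ (∀ k, IsSidon (A k : Set ℤ)) ∧
      (∀ k, e k ∈ A (k + 1) + A (k + 1)) ∧ ∀ k, ∀ a ∈ A k, |a| ≤ 65 * (k : ℤ) ^ 4 := by
  choose! next hlt hSidon hmem hcard habs using
    fun (A : Finset ℤ) (hA : IsSidon (A : Set ℤ)) (n : ℤ) => hA.exists_ssuperset_mem_add n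
  obtain ⟨A, hA0, hAsucc⟩ : ∃ A : ℕ → Finset ℤ, A 0 = ∅ ∧ ∀ k, A (k + 1) = next (A k) (e k) :=
    ⟨Nat.rec ∅ fun k A => next A (e k), rfl, fun _ => rfl⟩
  have hA (k : ℕ) : IsSidon (A k : Set ℤ) := by
    induction k with
    | zero => simpa [hA0] using isSidon_empty
    | succ k ih => rw [hAsucc]; exact hSidon _ ih _
  have hA_card (k : ℕ) : #(A k) ≤ 2 * k := by
    induction k with
    | zero => simp [hA0]
    | succ k ih => rw [hAsucc]; exact (hcard _ (hA k) _).trans (by omega)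
  have hA_abs (k : ℕ) : ∀ a ∈ A k, |a| ≤ 65 * (k : ℤ) ^ 4 := by
    induction k with
    | zero => simp [hA0]
    | succ k ih =>
      intro a ha
      push_cast
      rcases habs _ (hA k) _ a (hAsucc k ▸ ha) with ha | ha
      · exact (ih a ha).trans (by gcongr; omega)
      · calc |a| ≤ |e k| + (4 * ((#(A k) : ℤ) + 2) ^ 4 + 1) := ha
          _ ≤ k + (4 * (2 * k + 2) ^ 4 + 1) := by
            gcongr
            exacts [he k, mod_cast hA_card k]
          _ = (k + 1) + 64 * (k + 1) ^ 4 := by ring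
          _ ≤ (k + 1) ^ 4 + 64 * (k + 1) ^ 4 := by
            gcongr
            exact le_self_pow₀ (by omega) (by norm_num)
          _ = 65 * ((k : ℤ) + 1) ^ 4 := by ring
  exact ⟨A, strictMono_nat_of_lt_succ fun k => hAsucc k ▸ hlt _ (hA k) _, hA,
    fun k => hAsucc k ▸ hmem _ (hA k) _, hA_abs⟩

lemma IsSidon.isUniqueRepBasis {A : Set ℤ} (hA : IsSidon A) (hadd : A + A = univ) :
    IsUniqueRepBasis A := by
  intro n
  obtain ⟨x, hx, y, hy, hxy : x + y = n⟩ := hadd.symm.subset (mem_univ n)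
  wlog hle : x ≤ y generalizing x y
  · exact this y hy x hx (by omega) (by omega)
  refine ncard_eq_one.2 ⟨(x, y), Subset.antisymm ?_ ?_⟩
  · rintro ⟨p, q⟩ ⟨hp, hq, hpq, hsum⟩
    have := hA hp hq hx hy (hsum.trans hxy.symm)
    grind
  · rintro _ rfl
    exact ⟨hx, hy, hle, hxy⟩

lemma card_le_countIn {A : Set ℤ} {s : Finset ℤ} {y x : ℝ} (hsA : (s : Set ℤ) ⊆ A)
    (hs : ∀ a ∈ s, (a : ℝ) ∈ Icc y x) : #s ≤ countIn A y x := by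
  rw [← ncard_coe_finset]
  refine ncard_le_ncard (fun a ha => ⟨hsA ha, hs a ha⟩) ((finite_Icc ⌈y⌉ ⌊x⌋).subset ?_)
  rintro a ⟨-, hya, hax⟩
  exact ⟨Int.ceil_le.2 hya, Int.le_floor.2 hax⟩

lemma isBigO_rpow_inv_of_forall_natCast_le {f : ℝ → ℝ} {C : ℝ} (hC : 0 < C) {d : ℕ} (hd : d ≠ 0)
    (hf : ∀ (k : ℕ) (x : ℝ), C * k ^ d ≤ x → k ≤ f x) :
    (fun x : ℝ => x ^ (d⁻¹ : ℝ)) =O[atTop] f := by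
  refine IsBigO.of_bound (C ^ (d⁻¹ : ℝ) * 2) ?_
  filter_upwards [eventually_ge_atTop C] with x hx
  have hx0 : 0 ≤ x := hC.le.trans hx
  set y := (x / C) ^ (d⁻¹ : ℝ) with hy
  have hy1 : 1 ≤ y := Real.one_le_rpow ((one_le_div hC).2 hx) (by positivity)
  have hfloor : (⌊y⌋₊ : ℝ) ≤ f x := by
    refine hf _ _ ?_
    calc C * (⌊y⌋₊ : ℝ) ^ d ≤ C * y ^ d := by gcongr; exact Nat.floor_le (by linarith)
      _ = x := by rw [hy, Real.rpow_inv_natCast_pow (by positivity) hd]; field_simp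
  have hy2 : y ≤ 2 * f x := by
    have h1 : (1 : ℝ) ≤ ⌊y⌋₊ := by exact_mod_cast Nat.le_floor (by simpa using hy1)
    linarith [Nat.lt_floor_add_one y]
  calc ‖x ^ (d⁻¹ : ℝ)‖ = C ^ (d⁻¹ : ℝ) * y := by
        rw [Real.norm_of_nonneg (by positivity), hy, ← Real.mul_rpow hC.le (by positivity),
          mul_div_cancel₀ _ hC.ne']
    _ ≤ C ^ (d⁻¹ : ℝ) * (2 * ‖f x‖) := by
        gcongr
        exact hy2.trans (by gcongr; exact Real.le_norm_self _)
    _ = C ^ (d⁻¹ : ℝ) * 2 * ‖f x‖ := by ring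

lemma eventually_const_mul_log_lt {f : ℝ → ℝ} {r : ℝ} (hr : 0 < r) (hf : 0 ≤ f)
    (hrf : (fun x : ℝ => x ^ r) =O[atTop] f) (c : ℝ) :
    ∀ᶠ x : ℝ in atTop, c * Real.log x < f x := by
  have hlog : Real.log =o[atTop] f := (isLittleO_log_rpow_atTop hr).trans_isBigO hrf
  filter_upwards [(hlog.const_mul_left (|c| + 1)).bound one_pos, eventually_gt_atTop 1] with x hx
    hx1
  have := Real.log_pos hx1
  calc c * Real.log x < (|c| + 1) * Real.log x := by gcongr; linarith [le_abs_self c]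
    _ ≤ ‖(|c| + 1) * Real.log x‖ := Real.le_norm_self _
    _ ≤ f x := by rwa [one_mul, Real.norm_of_nonneg (hf x)] at hx

lemma abs_le_intEquivNat (m : ℤ) : |m| ≤ Equiv.intEquivNat m := by
  cases m with
  | ofNat k =>
    change |(k : ℤ)| ≤ (2 * k : ℕ)
    grind
  | negSucc k =>
    change |Int.negSucc k| ≤ (2 * k + 1 : ℕ)
    grind

theorem exists_urb_gt_const_mul_log_general :
    ∃ A : Set ℤ, IsUniqueRepBasis A ∧
      (fun x : ℝ => x ^ (4⁻¹ : ℝ)) =O[atTop] fun x => (countIn A (-x) x : ℝ) := by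
  let e := Equiv.intEquivNat
  obtain ⟨A, hA, hSidon, hadd, habs⟩ := exists_strictMono_isSidon (e := e.symm) fun k => by
    simpa [e] using abs_le_intEquivNat (e.symm k)
  have hcoe : Monotone fun k => (A k : Set ℤ) := fun _ _ h => Finset.coe_subset.2 (hA.monotone h)
  refine ⟨⋃ k, (A k : Set ℤ), (IsSidon.iUnion hcoe.directed_le hSidon).isUniqueRepBasis ?_, ?_⟩
  · refine eq_univ_of_forall fun n => ?_
    have hn := hadd (e n)
    rw [e.symm_apply_apply, ← Finset.mem_coe, Finset.coe_add] at hn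
    exact add_subset_add (subset_iUnion _ _) (subset_iUnion _ _) hn
  · refine mod_cast isBigO_rpow_inv_of_forall_natCast_le (C := 65) (by norm_num) four_ne_zero
      fun k x hkx => ?_
    calc
      (k : ℝ) ≤ #(A k) := mod_cast (Finset.card_strictMono.comp hA).le_apply
      _ ≤ countIn (⋃ k, (A k : Set ℤ)) (-x) x := mod_cast
        card_le_countIn (subset_iUnion (fun k => (A k : Set ℤ)) k) fun a ha =>
          abs_le.1 <| le_trans (mod_cast habs k a ha) hkx

/-- For every `c > 0` there exists a unique representation basis `A` such that
`A(-x,x) > c log x` for all sufficiently large real `x`. -/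
theorem exists_urb_gt_const_mul_log (c : ℝ) (hc : 0 < c) :
    ∃ A : Set ℤ, IsUniqueRepBasis A ∧
      ∀ᶠ x : ℝ in atTop, c * Real.log x < (countIn A (-x) x : ℝ) := by
  obtain ⟨A, hA, hgrowth⟩ := exists_urb_gt_const_mul_log_general
  exact ⟨A, hA, eventually_const_mul_log_lt (by norm_num) (fun _ => Nat.cast_nonneg _) hgrowth c⟩
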